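/- Let l ≥ 2 and let 𝐬 = (s₁, …, s_l), 𝐬' = (s'₁, …, s'_l) be ladders with 𝐬 ▷₁ 𝐬' (so in particular s_r ▷ s'_r for all r and s_r ▷ s'_{r+1} for all r < l). Call a segment s 'small' if spar(s) ≤ spar(*s'₁) − |supp(s) − supp(*s'₁)|, where *s'₁ = [j'₁, i'₁ + h]. Then each of the segments s₁ ∩ s'₁, s₁ ∪ s'₁, s₁ ∩ s'₂, s₁ ∪ s'₂ is small. If moreover j'₁ < i₂ and j₂ − i'₁ > h, then s_l is not small (indeed spar(s_l) > spar(*s'₁) − |supp(s_l) − supp(*s'₁)|), and for every 2 ≤ r ≤ l and every t ∈ {r, r+1} with t ≤ l, neither s_r ∩ s'_t nor s_r ∪ s'_t is small. -/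

import Mathlib

/-!
Since `a + b - |a - b| = 2 min(a, b)`, for all pairs `t` and `b`
`spar b - |supp t - supp b| - spar t = 2 min(b.1 - t.1, b.2 - t.2)`.
So a segment `t` is small exactly when it lies below `*s'₁ = [j'₁, i'₁ + h]` at both endpoints.
The covering conditions put `s₁` below `*s'₁`, and replacing one of its endpoints by that of a
segment it covers only lowers it. The two extra assumptions say that `s₂` exceeds `*s'₁` at both
endpoints, hence so does every `s_r` with `r ≥ 2`. As `∩` keeps the first endpoint of `s_r` and `∪`
keeps the second, neither operation can make it small.
-/

namespace SnakePaper

/-- `zle a b` : `b - a` is a nonnegative integer (the integrality order `a ≤ b`). -/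
def zle (a b : ℚ) : Prop := ∃ n : ℤ, 0 ≤ n ∧ b - a = (n : ℚ)

/-- `zlt a b` : `b - a` is a positive integer (the integrality order `a < b`). -/
def zlt (a b : ℚ) : Prop := ∃ n : ℤ, 0 < n ∧ b - a = (n : ℚ)

/-- `s = (i, j)` is an `N`-segment: `2i ∈ ℤ`, `j - i ∈ ℤ` and `0 ≤ j - i ≤ N + 1`. -/
def IsSeg (N : ℕ) (s : ℚ × ℚ) : Prop :=
  (∃ m : ℤ, 2 * s.1 = (m : ℚ)) ∧
  ∃ n : ℤ, s.2 - s.1 = (n : ℚ) ∧ 0 ≤ n ∧ (n : ℚ) ≤ (N : ℚ) + 1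

/-- `s = (i, j)` is a proper `N`-segment: `2i ∈ ℤ`, `j - i ∈ ℤ` and `0 < j - i < N + 1`. -/
def IsProperSeg (N : ℕ) (s : ℚ × ℚ) : Prop :=
  (∃ m : ℤ, 2 * s.1 = (m : ℚ)) ∧
  ∃ n : ℤ, s.2 - s.1 = (n : ℚ) ∧ 0 < n ∧ (n : ℚ) < (N : ℚ) + 1

/-- `supp [i,j] = j - i`. -/
def supp (s : ℚ × ℚ) : ℚ := s.2 - s.1

/-- `spar [i,j] = i + j`. -/
def spar (s : ℚ × ℚ) : ℚ := s.1 + s.2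

/-- Right dual `s* = [j - h, i]`, where `h = N + 1`. -/
def dual (N : ℕ) (s : ℚ × ℚ) : ℚ × ℚ := (s.2 - ((N : ℚ) + 1), s.1)

/-- Left dual `*s = [j, i + h]`, where `h = N + 1`. -/
def ldual (N : ℕ) (s : ℚ × ℚ) : ℚ × ℚ := (s.2, s.1 + ((N : ℚ) + 1))

/-- `1 + s = [i + 1, j + 1]`. -/
def shift (s : ℚ × ℚ) : ℚ × ℚ := (s.1 + 1, s.2 + 1)

/-- `Covers N s₂ s₁` : `s₂ ▷ s₁`, i.e. `i₁ < i₂ ≤ j₁ < j₂ ≤ h + i₁` (integrality order). -/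
def Covers (N : ℕ) (s₂ s₁ : ℚ × ℚ) : Prop :=
  zlt s₁.1 s₂.1 ∧ zle s₂.1 s₁.2 ∧ zlt s₁.2 s₂.2 ∧ zle s₂.2 (((N : ℚ) + 1) + s₁.1)

/-- For `s₂ ▷ s₁`, the intersection `s₁ ∩ s₂ = [i₂, j₁]`. -/
def seginter (s₁ s₂ : ℚ × ℚ) : ℚ × ℚ := (s₂.1, s₁.2)

/-- For `s₂ ▷ s₁`, the union `s₁ ∪ s₂ = [i₁, j₂]`. -/
def segunion (s₁ s₂ : ℚ × ℚ) : ℚ × ℚ := (s₁.1, s₂.2)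

/-- `(s 0, …, s (l-1))` is a ladder of length `l`. -/
def IsLadder (N l : ℕ) (s : ℕ → ℚ × ℚ) : Prop :=
  (∀ k, k < l → IsSeg N (s k)) ∧
  ∀ k m, k < m → m < l → zlt (s k).1 (s m).1 ∧ zlt (s k).2 (s m).2

/-- `(s₁, s₂)` is a ladder of length 2. -/
def IsLadder2 (N : ℕ) (s₁ s₂ : ℚ × ℚ) : Prop :=
  IsSeg N s₁ ∧ IsSeg N s₂ ∧ zlt s₁.1 s₂.1 ∧ zlt s₁.2 s₂.2

/-- Componentwise covering of two length-`l` tuples: `𝐬 ▷ 𝐬'`. -/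
def CoversMulti (N l : ℕ) (s s' : ℕ → ℚ × ℚ) : Prop :=
  ∀ m, m < l → Covers N (s m) (s' m)

/-- `𝐬 ▷_p 𝐬'` for length-`l` tuples: `𝐬(0, l−k) ▷ 𝐬'(k, l)` for all `0 ≤ k ≤ p`. -/
def CoversP (N l p : ℕ) (s s' : ℕ → ℚ × ℚ) : Prop :=
  ∀ k, k ≤ p → ∀ m, m + k < l → Covers N (s m) (s' (m + k))

/-- `p` is an MY path for the segment `s` (`h = N + 1`; only values on `{0, …, h}` matter). -/
def IsMYPath (N : ℕ) (s : ℚ × ℚ) (p : ℕ → ℤ) : Prop :=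
  (∀ k, k < N + 1 → p (k + 1) = p k + 1 ∨ p (k + 1) = p k - 1) ∧
  (p 0 : ℚ) = 2 * s.2 ∧ (p (N + 1) : ℚ) = ((N : ℚ) + 1) + 2 * s.1

/-- `s_{p,k} = [(p(k) - k)/2, (p(k) + k)/2]`. -/
def pathSeg (p : ℕ → ℤ) (k : ℕ) : ℚ × ℚ :=
  (((p k : ℚ) - (k : ℚ)) / 2, ((p k : ℚ) + (k : ℚ)) / 2)

/-- `c_p^-` : segments at the local maxima of `p` in `[1, N]`. -/
def cMinus (N : ℕ) (p : ℕ → ℤ) : Set (ℚ × ℚ) :=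
  {t | ∃ k, 1 ≤ k ∧ k ≤ N ∧ t = pathSeg p k ∧ p (k - 1) = p k - 1 ∧ p (k + 1) = p k - 1}

/-- `c_p^+` : segments at the local minima of `p` in `[1, N]`. -/
def cPlus (N : ℕ) (p : ℕ → ℤ) : Set (ℚ × ℚ) :=
  {t | ∃ k, 1 ≤ k ∧ k ≤ N ∧ t = pathSeg p k ∧ p (k - 1) = p k + 1 ∧ p (k + 1) = p k + 1}

/-- `c_s^- = ⋃_{p ∈ ℙ_s} c_p^-`. -/
def cSegMinus (N : ℕ) (s : ℚ × ℚ) : Set (ℚ × ℚ) :=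
  {t | ∃ p, IsMYPath N s p ∧ t ∈ cMinus N p}

/-- `c_s^+ = ⋃_{p ∈ ℙ_s} c_p^+`. -/
def cSegPlus (N : ℕ) (s : ℚ × ℚ) : Set (ℚ × ℚ) :=
  {t | ∃ p, IsMYPath N s p ∧ t ∈ cPlus N p}

/-- `(p 0, …, p (l-1)) ∈ ℙ_𝐬` for the length-`l` tuple `𝐬`. -/
def IsPathTuple (N l : ℕ) (s : ℕ → ℚ × ℚ) (p : ℕ → ℕ → ℤ) : Prop :=
  (∀ m, m < l → IsMYPath N (s m) (p m)) ∧
  ∀ m n, m < n → n < l → ∀ k, k ≤ N + 1 → p m k < p n k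

/-- The highest path `p_s(k) = spar(s) + |k - supp(s)|` (rational-valued formula). -/
def highestPath (s : ℚ × ℚ) (k : ℚ) : ℚ := spar s + |k - supp s|

/-- The lowest path `p_s^*(k) = spar(s) + h - |k - (h - supp(s))|` (rational-valued formula). -/
def lowestPath (N : ℕ) (s : ℚ × ℚ) (k : ℚ) : ℚ :=
  spar s + ((N : ℚ) + 1) - |k - (((N : ℚ) + 1) - supp s)|

/-- `Small N s₁' t` : `spar(t) ≤ spar(*s₁') - |supp(t) - supp(*s₁')|` (integrality order). -/
def Small (N : ℕ) (s₁' t : ℚ × ℚ) : Prop :=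
  zle (spar t) (spar (ldual N s₁') - |supp t - supp (ldual N s₁')|)

/-- `(s₁, s₂)` and `(s₁', s₂')` are ladders and `(s₁, s₂) ▷₁ (s₁', s₂')`. -/
def Pair1Cover (N : ℕ) (s₁ s₁' s₂ s₂' : ℚ × ℚ) : Prop :=
  IsLadder2 N s₁ s₂ ∧ IsLadder2 N s₁' s₂' ∧
  Covers N s₁ s₁' ∧ Covers N s₂ s₂' ∧ Covers N s₁ s₂'

section IntegralityOrder

variable {a b c : ℚ}

theorem zle.le (h : zle a b) : a ≤ b := by
  obtain ⟨n, hn, hab⟩ := h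
  exact sub_nonneg.mp (hab ▸ Int.cast_nonneg hn)

theorem zlt.lt (h : zlt a b) : a < b := by
  obtain ⟨n, hn, hab⟩ := h
  exact sub_pos.mp (hab ▸ Int.cast_pos.mpr hn)

protected theorem zlt.zle (h : zlt a b) : zle a b := by
  obtain ⟨n, hn, hab⟩ := h
  exact ⟨n, hn.le, hab⟩

theorem zle_refl (a : ℚ) : zle a a := ⟨0, le_rfl, by simp⟩

theorem zle.trans (hab : zle a b) (hbc : zle b c) : zle a c := by
  obtain ⟨m, hm, hab⟩ := hab
  obtain ⟨n, hn, hbc⟩ := hbc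
  exact ⟨m + n, add_nonneg hm hn, by push_cast; linarith⟩

theorem zlt.trans_zle (hab : zlt a b) (hbc : zle b c) : zlt a c := by
  obtain ⟨m, hm, hab⟩ := hab
  obtain ⟨n, hn, hbc⟩ := hbc
  exact ⟨m + n, add_pos_of_pos_of_nonneg hm hn, by push_cast; linarith⟩

end IntegralityOrder

section EndpointOrder

variable {b t : ℚ × ℚ}

theorem spar_sub_abs_sub_spar (b t : ℚ × ℚ) :
    spar b - |supp t - supp b| - spar t = 2 * min (b.1 - t.1) (b.2 - t.2) := by
  have hsupp : supp b - supp t = (b.2 - t.2) - (b.1 - t.1) := by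
    simp only [supp]; ring
  have hmin := two_nsmul_inf_eq_add_sub_abs_sub (b.1 - t.1) (b.2 - t.2)
  rw [two_nsmul, ← two_mul] at hmin
  rw [hmin, abs_sub_comm, hsupp, spar, spar]
  ring

theorem spar_le_spar_sub_abs_iff : spar t ≤ spar b - |supp t - supp b| ↔ t ≤ b := by
  rw [← sub_nonneg, spar_sub_abs_sub_spar, mul_nonneg_iff_of_pos_left two_pos, le_min_iff,
    sub_nonneg, sub_nonneg, Prod.le_def]

theorem zle_spar_sub_abs (h₁ : zle t.1 b.1) (h₂ : zle t.2 b.2) :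
    zle (spar t) (spar b - |supp t - supp b|) := by
  obtain ⟨m, hm, h₁⟩ := h₁
  obtain ⟨n, hn, h₂⟩ := h₂
  exact ⟨2 * min m n, mul_nonneg zero_le_two (le_min hm hn), by
    rw [spar_sub_abs_sub_spar, h₁, h₂]; push_cast; rfl⟩

theorem spar_sub_abs_zlt (h₁ : zlt b.1 t.1) (h₂ : zlt b.2 t.2) :
    zlt (spar b - |supp t - supp b|) (spar t) := by
  obtain ⟨m, hm, h₁⟩ := h₁
  obtain ⟨n, _, h₂⟩ := h₂
  refine ⟨2 * max m n, mul_pos two_pos (lt_max_of_lt_left hm), ?_⟩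
  rw [← neg_sub, spar_sub_abs_sub_spar, ← neg_sub t.1, ← neg_sub t.2, h₁, h₂, min_neg_neg]
  push_cast
  ring

end EndpointOrder

section Small

variable {N : ℕ} {s t u v : ℚ × ℚ}

theorem ldual_snd (N : ℕ) (u : ℚ × ℚ) : (ldual N u).2 = ((N : ℚ) + 1) + u.1 :=
  add_comm _ _

theorem Small.le_ldual (h : Small N u t) : t ≤ ldual N u :=
  spar_le_spar_sub_abs_iff.mp h.le

theorem small_of_zle (h₁ : zle t.1 u.2) (h₂ : zle t.2 (((N : ℚ) + 1) + u.1)) : Small N u t :=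
  zle_spar_sub_abs h₁ (by rwa [ldual_snd])

theorem Covers.small_seginter (hu : Covers N s u) (hv : zle v.2 s.2) :
    Small N u (seginter v s) :=
  small_of_zle hu.2.1 (hv.trans hu.2.2.2)

theorem Covers.small_segunion (hu : Covers N s u) (hv : zle v.1 s.1) :
    Small N u (segunion v s) :=
  small_of_zle (hv.trans hu.2.1) hu.2.2.2

theorem not_small_seginter (h : u.2 < s.1) : ¬ Small N u (seginter v s) :=
  fun hsmall => hsmall.le_ldual.1.not_gt h

theorem not_small_segunion (h : ((N : ℚ) + 1) + u.1 < s.2) : ¬ Small N u (segunion v s) :=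
  fun hsmall => (hsmall.le_ldual.2.trans_eq (ldual_snd N u)).not_gt h

theorem not_small_of_lt_spar
    (h : spar (ldual N u) - |supp t - supp (ldual N u)| < spar t) : ¬ Small N u t :=
  fun hsmall => hsmall.le.not_gt h

end Small

theorem IsLadder.zle_of_le {N l k m : ℕ} {s : ℕ → ℚ × ℚ} (hs : IsLadder N l s)
    (hkm : k ≤ m) (hm : m < l) : zle (s k).1 (s m).1 ∧ zle (s k).2 (s m).2 := by
  rcases hkm.eq_or_lt with rfl | hkm
  · exact ⟨zle_refl _, zle_refl _⟩
  · exact (hs.2 k m hkm hm).imp zlt.zle zlt.zle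

theorem small_analysis_general {N l : ℕ} {s : ℕ → ℚ × ℚ} {u : ℚ × ℚ}
    (hs : IsLadder N l s) (hu : Covers N (s 0) u) :
    (∀ v, Covers N (s 0) v →
      Small N u (seginter v (s 0)) ∧ Small N u (segunion v (s 0))) ∧
    (zlt u.2 (s 1).1 ∧ zlt (((N : ℚ) + 1) + u.1) (s 1).2 →
      ∀ r, 1 ≤ r → r < l →
        zlt (spar (ldual N u) - |supp (s r) - supp (ldual N u)|) (spar (s r)) ∧
        ∀ v, ¬ Small N u (seginter v (s r)) ∧ ¬ Small N u (segunion v (s r))) := by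
  refine ⟨fun v hv => ⟨hu.small_seginter hv.2.2.1.zle, hu.small_segunion hv.1.zle⟩, ?_⟩
  rintro ⟨hfst, hsnd⟩ r hr hrl
  obtain ⟨hfst_le, hsnd_le⟩ := hs.zle_of_le hr hrl
  have hfst_r : zlt u.2 (s r).1 := hfst.trans_zle hfst_le
  have hsnd_r : zlt (((N : ℚ) + 1) + u.1) (s r).2 := hsnd.trans_zle hsnd_le
  exact ⟨spar_sub_abs_zlt hfst_r (by rwa [ldual_snd]),
    fun v => ⟨not_small_seginter hfst_r.lt, not_small_segunion hsnd_r.lt⟩⟩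

/-- For ladders `𝐬 ▷₁ 𝐬'` of length `l ≥ 2`: the segments `s₁ ∩ s'₁`, `s₁ ∪ s'₁`,
`s₁ ∩ s'₂`, `s₁ ∪ s'₂` are small; and if moreover `j'₁ < i₂` and `j₂ − i'₁ > h`,
then `s_l` is not small (indeed `spar(s_l) > spar(*s'₁) − |supp(s_l) − supp(*s'₁)|`)
and none of the segments `s_r ∩ s'_t`, `s_r ∪ s'_t` (for `2 ≤ r ≤ l`, `t ∈ {r, r+1}`,
`t ≤ l`) is small. -/
theorem small_analysis (N : ℕ) (hN : 1 ≤ N) (l : ℕ) (hl : 2 ≤ l)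
    (s s' : ℕ → ℚ × ℚ) (hs : IsLadder N l s) (hs' : IsLadder N l s')
    (hcov : CoversP N l 1 s s') :
    (Small N (s' 0) (seginter (s' 0) (s 0)) ∧
     Small N (s' 0) (segunion (s' 0) (s 0)) ∧
     Small N (s' 0) (seginter (s' 1) (s 0)) ∧
     Small N (s' 0) (segunion (s' 1) (s 0))) ∧
    ((zlt (s' 0).2 (s 1).1 ∧ zlt (((N : ℚ) + 1) + (s' 0).1) (s 1).2) →
      (¬ Small N (s' 0) (s (l - 1)) ∧
       zlt (spar (ldual N (s' 0)) - |supp (s (l - 1)) - supp (ldual N (s' 0))|)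
         (spar (s (l - 1))) ∧
       ∀ r, 1 ≤ r → r < l →
         ((¬ Small N (s' 0) (seginter (s' r) (s r)) ∧
           ¬ Small N (s' 0) (segunion (s' r) (s r))) ∧
          (r + 1 < l →
            ¬ Small N (s' 0) (seginter (s' (r + 1)) (s r)) ∧
            ¬ Small N (s' 0) (segunion (s' (r + 1)) (s r)))))) := by
  have hcov₀ : Covers N (s 0) (s' 0) := hcov 0 zero_le_one 0 (by omega)
  have hcov₁ : Covers N (s 0) (s' 1) := hcov 1 le_rfl 0 (by omega)
  obtain ⟨hsmall, hlarge⟩ := small_analysis_general hs hcov₀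
  refine ⟨and_assoc.mp ⟨hsmall _ hcov₀, hsmall _ hcov₁⟩, fun hbeyond => ?_⟩
  obtain ⟨hlast, -⟩ := hlarge hbeyond (l - 1) (by omega) (by omega)
  refine ⟨not_small_of_lt_spar hlast.lt, hlast, fun r hr hrl => ?_⟩
  obtain ⟨-, hnot⟩ := hlarge hbeyond r hr hrl
  exact ⟨hnot _, fun _ => hnot _⟩

end SnakePaper
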